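/- arXiv:2003.11216 — 3 statements merged into one kernel-verified Lean document; each statement's English description precedes it below -/
import Mathlib

section
/- Let a, b, d, μ, ν, γ > 0 be real constants, let t₀ ≤ t₁ be real numbers, and let e : ℝ → ℝⁿ be a function satisfying ‖e(t)‖ ≤ (b/a)(e^{a(t−t₀)} − 1) for all t ∈ [t₀, t₁]. If the triggering threshold is reached at t₁, i.e., d γ² ‖e(t₁)‖² ≥ μ e^{−ν t₁}, then the elapsed time satisfies t₁ − t₀ ≥ (1/a) ln( 1 + (a/(b γ)) √( μ e^{−ν t₁} / d ) ). -/
/-- The solution `ψ` of the comparison equation `ψ' = a ψ + b`, `ψ 0 = 0`, which bounds the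
measurement error at time `τ` after a triggering instant. The closed form is the solution only for
`a ≠ 0`; at `a = 0` division by zero makes it vanish. -/
noncomputable def errorEnvelope (a b τ : ℝ) : ℝ :=
  b / a * (Real.exp (a * τ) - 1)

theorem le_errorEnvelope_iff {a b δ τ : ℝ} (ha : 0 < a) (hb : 0 < b) (hδ : 0 < 1 + a / b * δ) :
    δ ≤ errorEnvelope a b τ ↔ 1 / a * Real.log (1 + a / b * δ) ≤ τ :=
  calc δ ≤ errorEnvelope a b τ
    _ ↔ a / b * δ ≤ Real.exp (a * τ) - 1 := by
      rw [errorEnvelope, ← inv_div a b, le_inv_mul_iff₀ (div_pos ha hb)]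
    _ ↔ 1 + a / b * δ ≤ Real.exp (a * τ) := le_sub_iff_add_le'
    _ ↔ Real.log (1 + a / b * δ) ≤ a * τ := (Real.log_le_iff_le_exp hδ).symm
    _ ↔ 1 / a * Real.log (1 + a / b * δ) ≤ τ := by rw [one_div, inv_mul_le_iff₀ ha]

theorem sqrt_div_div_le_iff {c d γ r : ℝ} (hd : 0 < d) (hγ : 0 < γ) (hr : 0 ≤ r) :
    √(c / d) / γ ≤ r ↔ c ≤ d * γ ^ 2 * r ^ 2 := by
  rw [div_le_iff₀' hγ, Real.sqrt_le_left (mul_nonneg hγ.le hr), div_le_iff₀' hd, mul_pow,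
    mul_assoc]

theorem inter_event_time_lower_bound_general {E : Type*} [SeminormedAddGroup E]
    {a b c d γ τ : ℝ} {x : E} (ha : 0 < a) (hb : 0 < b) (hd : 0 < d) (hγ : 0 < γ) (hc : 0 < c)
    (hbound : ‖x‖ ≤ errorEnvelope a b τ) (htrig : c ≤ d * γ ^ 2 * ‖x‖ ^ 2) :
    1 / a * Real.log (1 + a / (b * γ) * √(c / d)) ≤ τ := by
  have threshold_le_norm : √(c / d) / γ ≤ ‖x‖ :=
    (sqrt_div_div_le_iff hd hγ (norm_nonneg x)).mpr htrig
  have log_le : 1 / a * Real.log (1 + a / b * (√(c / d) / γ)) ≤ τ :=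
    (le_errorEnvelope_iff ha hb (by positivity)).mp (threshold_le_norm.trans hbound)
  rwa [div_mul_div_comm, mul_div_right_comm] at log_le

/-- The core quantitative claim of Theorem 2 (exclusion of Zeno behavior): if
`‖e(t)‖ ≤ (b/a)(e^{a(t−t₀)} − 1)` on `[t₀, t₁]` and the triggering threshold
`d γ² ‖e(t₁)‖² ≥ μ e^{−ν t₁}` is reached at `t₁`, then
`t₁ − t₀ ≥ (1/a) ln(1 + (a/(bγ)) √(μ e^{−ν t₁}/d))`. -/
theorem inter_event_time_lower_bound (n : ℕ) (a b d μ ν γ : ℝ)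
    (ha : 0 < a) (hb : 0 < b) (hd : 0 < d) (hμ : 0 < μ) (hν : 0 < ν) (hγ : 0 < γ)
    (t₀ t₁ : ℝ) (ht : t₀ ≤ t₁) (e : ℝ → EuclideanSpace ℝ (Fin n))
    (hbound : ∀ t ∈ Set.Icc t₀ t₁, ‖e t‖ ≤ (b / a) * (Real.exp (a * (t - t₀)) - 1))
    (htrig : d * γ ^ 2 * ‖e t₁‖ ^ 2 ≥ μ * Real.exp (-ν * t₁)) :
    t₁ - t₀ ≥ (1 / a) * Real.log (1 + (a / (b * γ)) * Real.sqrt (μ * Real.exp (-ν * t₁) / d)) :=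
  inter_event_time_lower_bound_general ha hb hd hγ (by positivity)
    (hbound t₁ (Set.right_mem_Icc.mpr ht)) htrig
end

section
/- Let N ≥ 1, let φ₁, …, φ_N and ε₁, …, ε_N be vectors in ℝ^q, set φ̃_i = φ_i + ε_i for i = 1, …, N and φ̃₀ = 0. Let a_{ij} ≥ 0 (1 ≤ i, j ≤ N) be symmetric weights (a_{ij} = a_{ji}, a_{ii} = 0) and let a_{i0} ≥ 0 for i = 1, …, N. Then −Σ_{i=1}^N a_{i0} ⟨φ_i, φ̃_i⟩ − Σ_{i=1}^N Σ_{j=1}^N a_{ij} ⟨φ_i, φ̃_i − φ̃_j⟩ ≤ −(1/4) Σ_{i=1}^N Σ_{j=1}^N a_{ij} ‖φ_i − φ_j‖² − (1/2) Σ_{i=1}^N a_{i0} ‖φ_i‖² + Σ_{i=1}^N [ (a_{i0} + Σ_{j=1}^N a_{ij}) ‖ε_i‖² − (1/4) Σ_{j=0}^N a_{ij} ‖φ̃_i − φ̃_j‖² ]. -/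
open RealInnerProductSpace

/-!
Write `H = L + Δ`, where `L` is the Laplacian of the weights `a` and `Δ = diag a0`. Since `H` is
symmetric, `φ̃ = φ + ε` gives the polarization identity
`φᵀ(H ⊗ I)φ̃ = (φᵀ(H ⊗ I)φ + φ̃ᵀ(H ⊗ I)φ̃ - εᵀ(H ⊗ I)ε) / 2`. The estimate bounds the `ε`-term from
above by twice the diagonal of `H` (the parallelogram law on each edge) and discards half of the
leader part of the `φ̃`-term.
-/

theorem sum_sum_mul_swap_of_symm {ι R : Type*} [Fintype ι] [NonUnitalNonAssocSemiring R]
    {a : ι → ι → R} (ha : ∀ i j, a i j = a j i) (f : ι → ι → R) :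
    ∑ i, ∑ j, a i j * f j i = ∑ i, ∑ j, a i j * f i j := by
  rw [Finset.sum_comm]
  exact Finset.sum_congr rfl fun i _ => Finset.sum_congr rfl fun j _ => by rw [ha]

section LaplacianForm

variable {ι E : Type*} [Fintype ι] [NormedAddCommGroup E] [InnerProductSpace ℝ E]

theorem norm_sub_sq_le_two_mul (x y : E) : ‖x - y‖ ^ 2 ≤ 2 * (‖x‖ ^ 2 + ‖y‖ ^ 2) := by
  have parallelogram := parallelogram_law_with_norm ℝ x y
  linarith [mul_self_nonneg ‖x + y‖]

theorem two_mul_real_inner_eq_norm_sq (x y : E) :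
    2 * ⟪x, y⟫ = ‖x‖ ^ 2 + ‖y‖ ^ 2 - ‖y - x‖ ^ 2 := by
  rw [norm_sub_sq_real, real_inner_comm]
  ring

/-- The bilinear form `xᵀ(L ⊗ I)y` of the Laplacian `L` of the edge weights `a`, for states `x`, `y`
with values in an inner product space. -/
def laplacianForm (a : ι → ι → ℝ) (x y : ι → E) : ℝ :=
  ∑ i, ∑ j, a i j * ⟪x i, y i - y j⟫

/-- The bilinear form `xᵀ((L + diag b) ⊗ I)y`. Here `b i` is the weight of the edge from node `i` to
a grounded node (the leader), whose state is `0`. -/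
def groundedLaplacianForm (a : ι → ι → ℝ) (b : ι → ℝ) (x y : ι → E) : ℝ :=
  ∑ i, b i * ⟪x i, y i⟫ + laplacianForm a x y

variable {a : ι → ι → ℝ} {b : ι → ℝ}

theorem two_mul_laplacianForm_eq_sum_inner_sub (ha : ∀ i j, a i j = a j i) (x y : ι → E) :
    2 * laplacianForm a x y = ∑ i, ∑ j, a i j * ⟪x i - x j, y i - y j⟫ := by
  calc
    2 * laplacianForm a x y
        = ∑ i, ∑ j, a i j * ⟪x i, y i - y j⟫ + ∑ i, ∑ j, a i j * ⟪x j, y j - y i⟫ := by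
      rw [sum_sum_mul_swap_of_symm ha fun i j => ⟪x i, y i - y j⟫, two_mul, laplacianForm]
    _ = ∑ i, ∑ j, a i j * ⟪x i - x j, y i - y j⟫ := by
      simp only [← Finset.sum_add_distrib, ← mul_add]
      refine Finset.sum_congr rfl fun i _ => Finset.sum_congr rfl fun j _ => ?_
      rw [← neg_sub (y i) (y j), inner_neg_right, ← sub_eq_add_neg, ← inner_sub_left]

theorem two_mul_laplacianForm_self (ha : ∀ i j, a i j = a j i) (x : ι → E) :
    2 * laplacianForm a x x = ∑ i, ∑ j, a i j * ‖x i - x j‖ ^ 2 := by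
  simp only [two_mul_laplacianForm_eq_sum_inner_sub ha, real_inner_self_eq_norm_sq]

theorem laplacianForm_polarization (ha : ∀ i j, a i j = a j i) (x y : ι → E) :
    2 * laplacianForm a x y
      = laplacianForm a x x + laplacianForm a y y - laplacianForm a (y - x) (y - x) := by
  have edge (i j : ι) : 2 * (a i j * ⟪x i - x j, y i - y j⟫)
      = a i j * ‖x i - x j‖ ^ 2 + a i j * ‖y i - y j‖ ^ 2
        - a i j * ‖(y - x) i - (y - x) j‖ ^ 2 := by
    rw [mul_left_comm, two_mul_real_inner_eq_norm_sq, sub_sub_sub_comm]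
    simp only [Pi.sub_apply]
    ring
  have total : 2 * (2 * laplacianForm a x y)
      = 2 * laplacianForm a x x + 2 * laplacianForm a y y
        - 2 * laplacianForm a (y - x) (y - x) := by
    simp only [two_mul_laplacianForm_self ha, two_mul_laplacianForm_eq_sum_inner_sub ha x y,
      Finset.mul_sum, edge, Finset.sum_add_distrib, Finset.sum_sub_distrib]
  linarith

theorem laplacianForm_self_le (ha : ∀ i j, a i j = a j i) (ha_nonneg : ∀ i j, 0 ≤ a i j)
    (x : ι → E) : laplacianForm a x x ≤ 2 * ∑ i, (∑ j, a i j) * ‖x i‖ ^ 2 := by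
  suffices 2 * laplacianForm a x x ≤ 2 * (2 * ∑ i, (∑ j, a i j) * ‖x i‖ ^ 2) by linarith
  calc
    2 * laplacianForm a x x
        = ∑ i, ∑ j, a i j * ‖x i - x j‖ ^ 2 := two_mul_laplacianForm_self ha x
    _ ≤ ∑ i, ∑ j, a i j * (2 * (‖x i‖ ^ 2 + ‖x j‖ ^ 2)) := by
      gcongr with i _ j _
      · exact ha_nonneg i j
      · exact norm_sub_sq_le_two_mul (x i) (x j)
    _ = 2 * (∑ i, ∑ j, a i j * ‖x i‖ ^ 2 + ∑ i, ∑ j, a i j * ‖x j‖ ^ 2) := by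
      simp only [mul_left_comm _ (2 : ℝ), mul_add, Finset.sum_add_distrib, Finset.mul_sum]
    _ = 2 * (2 * ∑ i, (∑ j, a i j) * ‖x i‖ ^ 2) := by
      rw [sum_sum_mul_swap_of_symm ha fun i _ => ‖x i‖ ^ 2]
      simp only [Finset.sum_mul, two_mul]

theorem two_mul_groundedLaplacianForm_self (ha : ∀ i j, a i j = a j i) (x : ι → E) :
    2 * groundedLaplacianForm a b x x
      = 2 * ∑ i, b i * ‖x i‖ ^ 2 + ∑ i, ∑ j, a i j * ‖x i - x j‖ ^ 2 := by
  simp only [groundedLaplacianForm, mul_add, two_mul_laplacianForm_self ha,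
    real_inner_self_eq_norm_sq]

theorem groundedLaplacianForm_polarization (ha : ∀ i j, a i j = a j i) (x y : ι → E) :
    2 * groundedLaplacianForm a b x y
      = groundedLaplacianForm a b x x + groundedLaplacianForm a b y y
        - groundedLaplacianForm a b (y - x) (y - x) := by
  have grounding : 2 * ∑ i, b i * ⟪x i, y i⟫
      = ∑ i, b i * ‖x i‖ ^ 2 + ∑ i, b i * ‖y i‖ ^ 2 - ∑ i, b i * ‖(y - x) i‖ ^ 2 := by
    simp only [Finset.mul_sum, mul_left_comm (2 : ℝ), two_mul_real_inner_eq_norm_sq, mul_sub,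
      mul_add, Finset.sum_add_distrib, Finset.sum_sub_distrib, Pi.sub_apply]
  simp only [groundedLaplacianForm, real_inner_self_eq_norm_sq]
  linarith [laplacianForm_polarization ha x y]

theorem groundedLaplacianForm_self_le (ha : ∀ i j, a i j = a j i) (ha_nonneg : ∀ i j, 0 ≤ a i j)
    (hb : ∀ i, 0 ≤ b i) (x : ι → E) :
    groundedLaplacianForm a b x x ≤ 2 * ∑ i, (b i + ∑ j, a i j) * ‖x i‖ ^ 2 := by
  have grounding_nonneg : 0 ≤ ∑ i, b i * ‖x i‖ ^ 2 :=
    Finset.sum_nonneg fun i _ => mul_nonneg (hb i) (sq_nonneg _)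
  simp only [groundedLaplacianForm, real_inner_self_eq_norm_sq, add_mul, Finset.sum_add_distrib]
  linarith [laplacianForm_self_le ha ha_nonneg x]

theorem le_two_mul_groundedLaplacianForm_self (ha : ∀ i j, a i j = a j i) (hb : ∀ i, 0 ≤ b i)
    (x : ι → E) :
    ∑ i, (b i * ‖x i‖ ^ 2 + ∑ j, a i j * ‖x i - x j‖ ^ 2)
      ≤ 2 * groundedLaplacianForm a b x x := by
  have grounding_nonneg : 0 ≤ ∑ i, b i * ‖x i‖ ^ 2 :=
    Finset.sum_nonneg fun i _ => mul_nonneg (hb i) (sq_nonneg _)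
  rw [two_mul_groundedLaplacianForm_self ha, Finset.sum_add_distrib]
  linarith

end LaplacianForm

theorem lyapunov_derivative_estimate_general {ι E : Type*} [Fintype ι] [NormedAddCommGroup E]
    [InnerProductSpace ℝ E] (φ ε φt : ι → E) (hφt : ∀ i, φt i = φ i + ε i)
    (φt0 : E) (hφt0 : φt0 = 0)
    (a : ι → ι → ℝ) (ha : ∀ i j, 0 ≤ a i j) (hsymm : ∀ i j, a i j = a j i)
    (a0 : ι → ℝ) (ha0 : ∀ i, 0 ≤ a0 i) :
    -(∑ i, a0 i * ⟪φ i, φt i⟫) - ∑ i, ∑ j, a i j * ⟪φ i, φt i - φt j⟫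
      ≤ -(1 / 4) * (∑ i, ∑ j, a i j * ‖φ i - φ j‖ ^ 2)
        - (1 / 2) * (∑ i, a0 i * ‖φ i‖ ^ 2)
        + ∑ i, ((a0 i + ∑ j, a i j) * ‖ε i‖ ^ 2
            - (1 / 4) * (a0 i * ‖φt i - φt0‖ ^ 2 + ∑ j, a i j * ‖φt i - φt j‖ ^ 2)) := by
  have error_eq : φt - φ = ε := funext fun i => by simp [hφt]
  have lhs_eq : -(∑ i, a0 i * ⟪φ i, φt i⟫) - ∑ i, ∑ j, a i j * ⟪φ i, φt i - φt j⟫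
      = -groundedLaplacianForm a a0 φ φt := (neg_add' _ _).symm
  have polarization := groundedLaplacianForm_polarization (b := a0) hsymm φ φt
  have state_eq := two_mul_groundedLaplacianForm_self (b := a0) hsymm φ
  have error_le := groundedLaplacianForm_self_le hsymm ha ha0 ε
  have measured_le := le_two_mul_groundedLaplacianForm_self hsymm ha0 φt
  rw [error_eq] at polarization
  simp only [lhs_eq, hφt0, sub_zero, Finset.sum_sub_distrib, ← Finset.mul_sum]
  linarith

/-- The key Lyapunov-derivative estimate (equations (40)–(43)) in the proof of
Theorem 3: with `φ̃ᵢ = φᵢ + εᵢ`, `φ̃₀ = 0`, symmetric nonnegative weights `a i j`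
(zero diagonal) and leader weights `a0 i ≥ 0`,
`−Σᵢ a0 i ⟨φᵢ, φ̃ᵢ⟩ − Σᵢⱼ a i j ⟨φᵢ, φ̃ᵢ − φ̃ⱼ⟩
  ≤ −(1/4) Σᵢⱼ a i j ‖φᵢ − φⱼ‖² − (1/2) Σᵢ a0 i ‖φᵢ‖²
    + Σᵢ [(a0 i + Σⱼ a i j) ‖εᵢ‖² − (1/4) Σ_{j=0}^N a i j ‖φ̃ᵢ − φ̃ⱼ‖²]`,
where the `j = 0` term of the last inner sum is `a0 i * ‖φ̃ᵢ − φ̃₀‖²`. -/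
theorem lyapunov_derivative_estimate (N q : ℕ) (hN : 1 ≤ N)
    (φ ε φt : Fin N → EuclideanSpace ℝ (Fin q))
    (hφt : ∀ i, φt i = φ i + ε i)
    (φt0 : EuclideanSpace ℝ (Fin q)) (hφt0 : φt0 = 0)
    (a : Fin N → Fin N → ℝ) (ha : ∀ i j, 0 ≤ a i j)
    (hsymm : ∀ i j, a i j = a j i) (hdiag : ∀ i, a i i = 0)
    (a0 : Fin N → ℝ) (ha0 : ∀ i, 0 ≤ a0 i) :
    -(∑ i, a0 i * ⟪φ i, φt i⟫) - ∑ i, ∑ j, a i j * ⟪φ i, φt i - φt j⟫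
      ≤ -(1 / 4) * (∑ i, ∑ j, a i j * ‖φ i - φ j‖ ^ 2)
        - (1 / 2) * (∑ i, a0 i * ‖φ i‖ ^ 2)
        + ∑ i, ((a0 i + ∑ j, a i j) * ‖ε i‖ ^ 2
            - (1 / 4) * (a0 i * ‖φt i - φt0‖ ^ 2 + ∑ j, a i j * ‖φt i - φt j‖ ^ 2)) := by
  exact lyapunov_derivative_estimate_general φ ε φt hφt φt0 hφt0 a ha hsymm a0 ha0
end

section
/- Consider N heterogeneous linear agents with dynamics ẋ_i = A_i x_i + B_i u_i + E_i w₀ and outputs y_i = C_i x_i + F_i w₀ (i = 1, …, N), where x_i ∈ ℝ^{n_i}, u_i ∈ ℝ^{m_i}, y_i ∈ ℝ^{p}, and the exogenous signal w₀ ∈ ℝ^q satisfies ẇ₀ = S w₀. Suppose for each i there exist matrices Π_i ∈ ℝ^{n_i×q}, U_i ∈ ℝ^{m_i×q} and a common matrix R ∈ ℝ^{p×q} solving the regulator equations Π_i S = A_i Π_i + B_i U_i + E_i and R = C_i Π_i + F_i. Let K_{1i} be such that A_i + B_i K_{1i} is Hurwitz, set K_{2i} = U_i − K_{1i} Π_i,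 and let w_i : [0,∞) → ℝ^q be continuous observer signals satisfying w_i(t) − w₀(t) → 0 as t → ∞. If x_i solves the closed loop ẋ_i = A_i x_i + B_i (K_{1i} x_i + K_{2i} w_i) + E_i w₀, then y_i(t) − R w₀(t) → 0 as t → ∞ for every i; in particular, output consensus is achieved: y_i(t) − y_j(t) → 0 as t → ∞ for all i, j. -/
open Filter Topology

/-!
Along `φ = x - Π w₀` the regulator equations turn the closed loop of one agent into
`φ̇ = (A + B K₁) φ + g`, where the input `g = B K₂ (w - w₀)` vanishes at infinity, and
`y - R w₀ = C φ`. It therefore suffices that a Hurwitz linear system with vanishing input has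
vanishing state. Over `ℂ`, factor the characteristic polynomial as `∏ (X - μ)`: if `(T - μ) φ`
vanishes at infinity, then `φ` solves the scalar equation `φ̇ = μ φ + h` with `h = (T - μ) φ + g`
vanishing. So the factors can be removed one at a time, starting from Cayley–Hamilton.
-/

open Asymptotics Polynomial Matrix

section Asymptotics

variable {V : Type*} [NormedAddCommGroup V]

/-- The `∞ / ∞` case of the rule of L’Hôpital, for vector-valued `f`. -/
theorem isLittleO_of_hasDerivAt_isLittleO [NormedSpace ℝ V] {f f' : ℝ → V} {g g' : ℝ → ℝ}
    (hf : ∀ᶠ t in atTop, HasDerivAt f (f' t) t) (hg : ∀ᶠ t in atTop, HasDerivAt g (g' t) t)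
    (hg'_nonneg : ∀ᶠ t in atTop, 0 ≤ g' t) (hg_top : Tendsto g atTop atTop)
    (hfg : f' =o[atTop] g') : f =o[atTop] g := by
  refine isLittleO_iff.2 fun c hc ↦ ?_
  have hbound : ∀ᶠ t in atTop, ‖f' t‖ ≤ c / 2 * g' t := by
    filter_upwards [isLittleO_iff.1 hfg (half_pos hc), hg'_nonneg] with t ht hg't
    rwa [Real.norm_of_nonneg hg't] at ht
  obtain ⟨T, hT⟩ := (hf.and (hg.and hbound)).exists_forall_of_atTop
  have hg_comp (t : ℝ) (ht : T ≤ t) :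
      HasDerivAt (fun s ↦ ‖f T‖ + c / 2 * (g s - g T)) (c / 2 * g' t) t :=
    (((hT t ht).2.1.sub_const _).const_mul _).const_add _
  have hf_le (t : ℝ) (ht : T ≤ t) : ‖f t‖ ≤ ‖f T‖ + c / 2 * (g t - g T) :=
    image_norm_le_of_norm_deriv_right_le_deriv_boundary'
      (fun s hs ↦ (hT s hs.1).1.continuousAt.continuousWithinAt)
      (fun s hs ↦ (hT s hs.1).1.hasDerivWithinAt) (by simp)
      (fun s hs ↦ (hg_comp s hs.1).continuousAt.continuousWithinAt)
      (fun s hs ↦ (hg_comp s hs.1).hasDerivWithinAt)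
      (fun s hs ↦ (hT s hs.1).2.2) (Set.right_mem_Icc.2 ht)
  filter_upwards [eventually_ge_atTop T, (hg_top.const_mul_atTop (half_pos hc)).eventually_ge_atTop
    (‖f T‖ - c / 2 * g T)] with t ht hgt
  calc ‖f t‖ ≤ ‖f T‖ + c / 2 * (g t - g T) := hf_le t ht
    _ ≤ c * g t := by linarith
    _ ≤ c * ‖g t‖ := by gcongr; exact Real.le_norm_self _

variable [NormedSpace ℂ V]

theorem hasDerivAt_exp_neg_mul_smul {μ : ℂ} {ψ : ℝ → V} {h : V} {t : ℝ}
    (hψ : HasDerivAt ψ (μ • ψ t + h) t) :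
    HasDerivAt (fun s : ℝ ↦ Complex.exp (-μ * s) • ψ s) (Complex.exp (-μ * t) • h) t := by
  have hlin : HasDerivAt (fun s : ℝ ↦ -μ * (s : ℂ)) (-μ) t := by
    simpa only [Complex.ofRealCLM_apply, Complex.ofReal_one, mul_one] using
      (Complex.ofRealCLM.hasDerivAt (x := t)).const_mul (-μ)
  refine (hlin.cexp.smul hψ).congr_deriv ?_
  module

theorem tendsto_zero_of_hasDerivAt_smul_add {μ : ℂ} (hμ : μ.re < 0) {ψ h : ℝ → V}
    (hψ : ∀ᶠ t in atTop, HasDerivAt ψ (μ • ψ t + h t) t) (hh : Tendsto h atTop (𝓝 0)) :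
    Tendsto ψ atTop (𝓝 0) := by
  have hneg : 0 < -μ.re := neg_pos.2 hμ
  have hnorm (t : ℝ) : ‖Complex.exp (-μ * t)‖ = Real.exp (-μ.re * t) := by
    simp [Complex.norm_exp]
  have hexp_deriv (t : ℝ) : HasDerivAt (fun s ↦ Real.exp (-μ.re * s))
      (Real.exp (-μ.re * t) * -μ.re) t := by
    simpa only [id, mul_one] using ((hasDerivAt_id t).const_mul (-μ.re)).exp
  have hexp_top : Tendsto (fun t ↦ Real.exp (-μ.re * t)) atTop atTop :=
    Real.tendsto_exp_atTop.comp (tendsto_id.const_mul_atTop hneg)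
  have hderiv_isLittleO : (fun t : ℝ ↦ Complex.exp (-μ * t) • h t) =o[atTop]
      fun t ↦ Real.exp (-μ.re * t) * -μ.re :=
    (IsBigO.of_norm_le fun t ↦ (hnorm t).le).smul_isLittleO
      ((isLittleO_const_iff hneg.ne').2 hh)
  have hψ_isLittleO : (fun t : ℝ ↦ Complex.exp (-μ * t) • ψ t) =o[atTop]
      fun t ↦ Real.exp (-μ.re * t) :=
    isLittleO_of_hasDerivAt_isLittleO (hψ.mono fun _ ↦ hasDerivAt_exp_neg_mul_smul)
      (.of_forall hexp_deriv) (.of_forall fun _ ↦ by positivity) hexp_top hderiv_isLittleO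
  refine tendsto_zero_iff_norm_tendsto_zero.2 (hψ_isLittleO.norm_left.tendsto_div_nhds_zero.congr
    fun t ↦ ?_)
  rw [norm_smul, hnorm, mul_div_cancel_left₀ _ (Real.exp_ne_zero _)]

theorem tendsto_zero_of_aeval_prod_X_sub_C_apply_eq_zero (T : V →L[ℂ] V) {s : Multiset ℂ}
    (hs : ∀ μ ∈ s, μ.re < 0) {ψ g : ℝ → V}
    (hψ : ∀ᶠ t in atTop, HasDerivAt ψ (T (ψ t) + g t) t) (hg : Tendsto g atTop (𝓝 0))
    (hTψ : ∀ t, aeval T (s.map fun μ ↦ X - C μ).prod (ψ t) = 0) : Tendsto ψ atTop (𝓝 0) := by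
  induction s using Multiset.induction_on generalizing ψ g with
  | empty => exact tendsto_const_nhds.congr fun t ↦ by simpa using (hTψ t).symm
  | cons μ s ih =>
    set D : V →L[ℂ] V := aeval T (X - C μ) with hD
    have hD_apply (v : V) : D v = T v - μ • v := by simp [hD, Algebra.algebraMap_eq_smul_one]
    have hD_tendsto {φ : ℝ → V} (hφ : Tendsto φ atTop (𝓝 0)) :
        Tendsto (fun t ↦ D (φ t)) atTop (𝓝 0) :=
      (D.continuous.tendsto' 0 0 (map_zero D)).comp hφ
    have hDψ : Tendsto (fun t ↦ D (ψ t)) atTop (𝓝 0) := by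
      refine ih (fun ν hν ↦ hs ν (Multiset.mem_cons_of_mem hν)) (hψ.mono fun t ht ↦ ?_)
        (hD_tendsto hg) fun t ↦ ?_
      · refine ((D.restrictScalars ℝ).hasFDerivAt.comp_hasDerivAt t ht).congr_deriv ?_
        simp only [ContinuousLinearMap.coe_restrictScalars', hD_apply, map_add, map_sub, map_smul]
      · rw [← hTψ t, Multiset.map_cons, Multiset.prod_cons, mul_comm, map_mul,
          mul_apply_eq_comp]
    refine tendsto_zero_of_hasDerivAt_smul_add (hs μ (Multiset.mem_cons_self μ s))
      (hψ.mono fun t ht ↦ ht.congr_deriv ?_) (by simpa only [add_zero] using hDψ.add hg)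
    rw [hD_apply]
    abel

theorem tendsto_zero_of_charpoly_roots_re_neg [FiniteDimensional ℂ V] (T : V →ₗ[ℂ] V)
    (hT : ∀ μ : ℂ, T.charpoly.IsRoot μ → μ.re < 0) {ψ g : ℝ → V}
    (hψ : ∀ᶠ t in atTop, HasDerivAt ψ (T (ψ t) + g t) t) (hg : Tendsto g atTop (𝓝 0)) :
    Tendsto ψ atTop (𝓝 0) := by
  have hcayley : aeval (Module.End.toContinuousLinearMap V T) T.charpoly = 0 := by
    rw [aeval_algHom_apply, T.aeval_self_charpoly, map_zero]
  refine tendsto_zero_of_aeval_prod_X_sub_C_apply_eq_zero (Module.End.toContinuousLinearMap V T)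
    (fun μ hμ ↦ hT μ (isRoot_of_mem_roots hμ)) hψ hg fun t ↦ ?_
  rw [← (IsAlgClosed.splits _).eq_prod_roots_of_monic T.charpoly_monic, hcayley,
    _root_.zero_apply]

end Asymptotics

section Hurwitz

variable {n : Type*} [Fintype n]

/-- A real square matrix is Hurwitz if all its complex eigenvalues, taken as the roots of the
characteristic polynomial over `ℂ`, have negative real part. It expresses exponential stability of
the linear system `φ̇ = M φ`. -/
def IsHurwitz [DecidableEq n] (M : Matrix n n ℝ) : Prop :=
  ∀ μ : ℂ, (M.map Complex.ofReal).charpoly.IsRoot μ → μ.re < 0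

theorem hasDerivAt_ofReal_comp_mulVec_add {M : Matrix n n ℝ} {φ : ℝ → n → ℝ} {g : n → ℝ} {t : ℝ}
    (hφ : HasDerivAt φ (M *ᵥ φ t + g) t) :
    HasDerivAt (fun s ↦ Complex.ofReal ∘ φ s)
      (M.map Complex.ofReal *ᵥ (Complex.ofReal ∘ φ t) + Complex.ofReal ∘ g) t := by
  refine hasDerivAt_pi.2 fun i ↦ (hasDerivAt_pi.1 hφ i).ofReal_comp.congr_deriv ?_
  rw [Pi.add_apply, Complex.ofReal_add]
  exact congrArg (· + _) (Complex.ofRealHom.map_mulVec M (φ t) i)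

theorem IsHurwitz.tendsto_zero [DecidableEq n] {M : Matrix n n ℝ} (hM : IsHurwitz M)
    {φ g : ℝ → n → ℝ} (hφ : ∀ᶠ t in atTop, HasDerivAt φ (M *ᵥ φ t + g t) t)
    (hg : Tendsto g atTop (𝓝 0)) : Tendsto φ atTop (𝓝 0) := by
  have hg_complex : Tendsto (fun t ↦ Complex.ofReal ∘ g t) atTop (𝓝 0) :=
    tendsto_pi_nhds.2 fun i ↦
      (Complex.continuous_ofReal.tendsto' 0 0 Complex.ofReal_zero).comp (tendsto_pi_nhds.1 hg i)
  have hφ_complex : Tendsto (fun t ↦ Complex.ofReal ∘ φ t) atTop (𝓝 0) := by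
    refine tendsto_zero_of_charpoly_roots_re_neg
      (M.map Complex.ofReal).mulVecLin (fun μ hμ ↦ hM μ ?_)
      (hφ.mono fun _ ↦ hasDerivAt_ofReal_comp_mulVec_add) hg_complex
    rwa [charpoly_mulVecLin] at hμ
  exact tendsto_pi_nhds.2 fun i ↦
    (Complex.continuous_re.tendsto' 0 0 Complex.zero_re).comp (tendsto_pi_nhds.1 hφ_complex i)

end Hurwitz

section Regulation

variable {n m p q : Type*} [Fintype n] [Fintype q]

theorem hasDerivAt_mulVec [Finite m] (M : Matrix m n ℝ) {f : ℝ → n → ℝ} {f' : n → ℝ} {t : ℝ}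
    (hf : HasDerivAt f f' t) : HasDerivAt (fun s ↦ M *ᵥ f s) (M *ᵥ f') t :=
  have := Fintype.ofFinite m
  M.mulVecLin.toContinuousLinearMap.hasFDerivAt.comp_hasDerivAt t hf

theorem tendsto_mulVec_zero {α : Type*} {l : Filter α} (M : Matrix m n ℝ) {f : α → n → ℝ}
    (hf : Tendsto f l (𝓝 0)) : Tendsto (fun a ↦ M *ᵥ f a) l (𝓝 0) :=
  ((continuous_const.matrix_mulVec continuous_id).tendsto' 0 0 (mulVec_zero M)).comp hf

variable [Fintype m] {A : Matrix n n ℝ} {B : Matrix n m ℝ} {E P : Matrix n q ℝ} {S : Matrix q q ℝ}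
  {U : Matrix m q ℝ} {K₁ : Matrix m n ℝ} {x : ℝ → n → ℝ} {w w₀ : ℝ → q → ℝ}

theorem hasDerivAt_sub_mulVec_of_regulator {t : ℝ} (hreg : P * S = A * P + B * U + E)
    (hw₀ : HasDerivAt w₀ (S *ᵥ w₀ t) t)
    (hx : HasDerivAt x
      (A *ᵥ x t + B *ᵥ (K₁ *ᵥ x t + (U - K₁ * P) *ᵥ w t) + E *ᵥ w₀ t) t) :
    HasDerivAt (fun s ↦ x s - P *ᵥ w₀ s)
      ((A + B * K₁) *ᵥ (x t - P *ᵥ w₀ t) + (B * (U - K₁ * P)) *ᵥ (w t - w₀ t)) t := by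
  refine (hx.sub (hasDerivAt_mulVec P hw₀)).congr_deriv ?_
  rw [mulVec_mulVec, hreg]
  simp only [mulVec_add, mulVec_sub, add_mulVec, sub_mulVec, mulVec_mulVec, Matrix.mul_sub,
    Matrix.add_mul, Matrix.mul_assoc]
  abel

theorem tendsto_sub_mulVec_zero_of_regulator [DecidableEq n] (hreg : P * S = A * P + B * U + E)
    (hHurwitz : IsHurwitz (A + B * K₁))
    (hw₀ : ∀ᶠ t in atTop, HasDerivAt w₀ (S *ᵥ w₀ t) t)
    (hw : Tendsto (fun t ↦ w t - w₀ t) atTop (𝓝 0))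
    (hx : ∀ᶠ t in atTop, HasDerivAt x
      (A *ᵥ x t + B *ᵥ (K₁ *ᵥ x t + (U - K₁ * P) *ᵥ w t) + E *ᵥ w₀ t) t) :
    Tendsto (fun t ↦ x t - P *ᵥ w₀ t) atTop (𝓝 0) :=
  hHurwitz.tendsto_zero
    (hw₀.mp <| hx.mono fun _ hxt hw₀t ↦ hasDerivAt_sub_mulVec_of_regulator hreg hw₀t hxt)
    (tendsto_mulVec_zero _ hw)

theorem tendsto_output_sub_zero {C : Matrix p n ℝ} {F R : Matrix p q ℝ} (hreg : R = C * P + F)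
    (hx : Tendsto (fun t ↦ x t - P *ᵥ w₀ t) atTop (𝓝 0)) :
    Tendsto (fun t ↦ C *ᵥ x t + F *ᵥ w₀ t - R *ᵥ w₀ t) atTop (𝓝 0) := by
  refine (tendsto_mulVec_zero C hx).congr fun t ↦ ?_
  rw [hreg, mulVec_sub, add_mulVec, mulVec_mulVec]
  abel

end Regulation

theorem heterogeneous_output_consensus_general {ι p q : Type*} [Fintype q] {n m : ι → Type*}
    [∀ i, Fintype (n i)] [∀ i, DecidableEq (n i)] [∀ i, Fintype (m i)]
    {A : ∀ i, Matrix (n i) (n i) ℝ} {B : ∀ i, Matrix (n i) (m i) ℝ} {C : ∀ i, Matrix p (n i) ℝ}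
    {E : ∀ i, Matrix (n i) q ℝ} {F : ι → Matrix p q ℝ} {S : Matrix q q ℝ}
    {P : ∀ i, Matrix (n i) q ℝ} {U : ∀ i, Matrix (m i) q ℝ} {R : Matrix p q ℝ}
    {K₁ : ∀ i, Matrix (m i) (n i) ℝ} {K₂ : ∀ i, Matrix (m i) q ℝ}
    (hreg_state : ∀ i, P i * S = A i * P i + B i * U i + E i)
    (hreg_output : ∀ i, R = C i * P i + F i)
    (hHurwitz : ∀ i, IsHurwitz (A i + B i * K₁ i)) (hK₂ : ∀ i, K₂ i = U i - K₁ i * P i)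
    {w₀ : ℝ → q → ℝ} (hw₀ : ∀ᶠ t in atTop, HasDerivAt w₀ (S *ᵥ w₀ t) t)
    {w : ι → ℝ → q → ℝ} (hw : ∀ i, Tendsto (fun t ↦ w i t - w₀ t) atTop (𝓝 0))
    {x : ∀ i, ℝ → n i → ℝ}
    (hx : ∀ i, ∀ᶠ t in atTop, HasDerivAt (x i)
      (A i *ᵥ x i t + B i *ᵥ (K₁ i *ᵥ x i t + K₂ i *ᵥ w i t) + E i *ᵥ w₀ t) t)
    {y : ι → ℝ → p → ℝ} (hy : ∀ i t, y i t = C i *ᵥ x i t + F i *ᵥ w₀ t) :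
    (∀ i, Tendsto (fun t ↦ y i t - R *ᵥ w₀ t) atTop (𝓝 0)) ∧
    (∀ i j, Tendsto (fun t ↦ y i t - y j t) atTop (𝓝 0)) := by
  have hregulation (i : ι) : Tendsto (fun t ↦ y i t - R *ᵥ w₀ t) atTop (𝓝 0) := by
    simp only [hK₂] at hx
    simpa only [hy] using tendsto_output_sub_zero (hreg_output i)
      (tendsto_sub_mulVec_zero_of_regulator (hreg_state i) (hHurwitz i) hw₀ (hw i) (hx i))
  refine ⟨hregulation, fun i j ↦ ?_⟩
  simpa only [sub_sub_sub_cancel_right, sub_zero] using (hregulation i).sub (hregulation j)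

/-- Theorem 4 of the paper: for heterogeneous agents `ẋᵢ = Aᵢxᵢ + Bᵢuᵢ + Eᵢw₀`,
`yᵢ = Cᵢxᵢ + Fᵢw₀` with exosystem `ẇ₀ = S w₀`, suppose the regulator equations
`Πᵢ S = Aᵢ Πᵢ + Bᵢ Uᵢ + Eᵢ`, `R = Cᵢ Πᵢ + Fᵢ` hold, `Aᵢ + Bᵢ K₁ᵢ` is Hurwitz,
`K₂ᵢ = Uᵢ − K₁ᵢ Πᵢ`, and the continuous observer signals satisfy `wᵢ − w₀ → 0`.
Then under the closed loop `ẋᵢ = Aᵢxᵢ + Bᵢ(K₁ᵢxᵢ + K₂ᵢwᵢ) + Eᵢw₀` one has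
`yᵢ − R w₀ → 0` for every `i`, and hence output consensus `yᵢ − yⱼ → 0`. -/
theorem heterogeneous_output_consensus (N p q : ℕ) (n m : Fin N → ℕ)
    (A : ∀ i, Matrix (Fin (n i)) (Fin (n i)) ℝ)
    (B : ∀ i, Matrix (Fin (n i)) (Fin (m i)) ℝ)
    (C : ∀ i, Matrix (Fin p) (Fin (n i)) ℝ)
    (E : ∀ i, Matrix (Fin (n i)) (Fin q) ℝ)
    (F : ∀ i, Matrix (Fin p) (Fin q) ℝ)
    (S : Matrix (Fin q) (Fin q) ℝ)
    (Pmat : ∀ i, Matrix (Fin (n i)) (Fin q) ℝ)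
    (U : ∀ i, Matrix (Fin (m i)) (Fin q) ℝ)
    (R : Matrix (Fin p) (Fin q) ℝ)
    (K₁ : ∀ i, Matrix (Fin (m i)) (Fin (n i)) ℝ)
    (K₂ : ∀ i, Matrix (Fin (m i)) (Fin q) ℝ)
    (hreg1 : ∀ i, Pmat i * S = A i * Pmat i + B i * U i + E i)
    (hreg2 : ∀ i, R = C i * Pmat i + F i)
    (hHurwitz : ∀ i, ∀ μ : ℂ,
      ((A i + B i * K₁ i).map Complex.ofReal).charpoly.IsRoot μ → μ.re < 0)
    (hK₂ : ∀ i, K₂ i = U i - K₁ i * Pmat i)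
    (w₀ : ℝ → Fin q → ℝ)
    (hw₀ : ∀ t : ℝ, 0 ≤ t → HasDerivAt w₀ (S.mulVec (w₀ t)) t)
    (w : ∀ _ : Fin N, ℝ → Fin q → ℝ)
    (hw : ∀ i, Continuous (w i))
    (hwconv : ∀ i, Tendsto (fun t => w i t - w₀ t) atTop (𝓝 0))
    (x : ∀ i : Fin N, ℝ → Fin (n i) → ℝ)
    (hx : ∀ i, ∀ t : ℝ, 0 ≤ t → HasDerivAt (x i)
      ((A i).mulVec (x i t)
        + (B i).mulVec ((K₁ i).mulVec (x i t) + (K₂ i).mulVec (w i t))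
        + (E i).mulVec (w₀ t)) t)
    (y : ∀ _ : Fin N, ℝ → Fin p → ℝ)
    (hy : ∀ i t, y i t = (C i).mulVec (x i t) + (F i).mulVec (w₀ t)) :
    (∀ i, Tendsto (fun t => y i t - R.mulVec (w₀ t)) atTop (𝓝 0)) ∧
    (∀ i j, Tendsto (fun t => y i t - y j t) atTop (𝓝 0)) := by
  exact heterogeneous_output_consensus_general hreg1 hreg2 hHurwitz hK₂
    ((eventually_ge_atTop 0).mono hw₀) hwconv (fun i ↦ (eventually_ge_atTop 0).mono (hx i)) hy
end
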